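/- Let 0 < α < n, 1 < s < n/α, and f ∈ L^1(cap_{α,s}). Then there exists C = C(α,s,n) > 0 such that for all t > 0, cap_{α,s}({x : M_{cap_{α,s}} f(x) > t}) ≤ (C/t) ∫ |f| d cap_{α,s}. -/

import Mathlib

open scoped ENNReal
open Metric Set MeasureTheory

noncomputable section

/-- `ℝⁿ` as Euclidean space. -/
abbrev Rn (n : ℕ) := EuclideanSpace ℝ (Fin n)

/-- The Choquet integral of a nonnegative function `g` with respect to a
(monotone) set function `C`: `∫ g dC := ∫_0^∞ C({g > t}) dt`. -/
noncomputable def choquet {X : Type*} (C : Set X → ℝ≥0∞) (g : X → ℝ≥0∞) : ℝ≥0∞ :=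
  ∫⁻ t in Ioi (0 : ℝ), C {x | ENNReal.ofReal t < g x}

/-- The Choquet integral of `g` restricted to a set `A`. -/
noncomputable def choquetOn {X : Type*} (C : Set X → ℝ≥0∞) (A : Set X) (g : X → ℝ≥0∞) : ℝ≥0∞ :=
  ∫⁻ t in Ioi (0 : ℝ), C {x | x ∈ A ∧ ENNReal.ofReal t < g x}

/-- The `L^∞(C)` norm: `inf {λ > 0 : C({|f| > λ}) = 0}` (formulated in `ℝ≥0∞`). -/
noncomputable def choquetEssSup {X : Type*} (C : Set X → ℝ≥0∞) (f : X → ℝ) : ℝ≥0∞ :=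
  sInf {l : ℝ≥0∞ | C {x | l < ENNReal.ofReal |f x|} = 0}

/-- `C`-quasicontinuity of a function `f`. -/
def QuasiCont {X : Type*} [TopologicalSpace X] (C : Set X → ℝ≥0∞) (f : X → ℝ) : Prop :=
  ∀ ε : ℝ≥0∞, 0 < ε → ∃ U : Set X, IsOpen U ∧ C U < ε ∧ ContinuousOn f Uᶜ

/-- Membership in the capacitary space `L^p(C)`: `C`-quasicontinuous with
finite `p`-th power Choquet integral. -/
def MemChoquetLp {X : Type*} [TopologicalSpace X] (C : Set X → ℝ≥0∞) (p : ℝ) (f : X → ℝ) : Prop :=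
  QuasiCont C f ∧ choquet C (fun x => ENNReal.ofReal |f x| ^ p) < ∞

/-- The constant `γ(α)` in the Riesz kernel `I_α = (1/γ(α)) |x|^{α-n}`. -/
noncomputable def rieszConst (n : ℕ) (α : ℝ) : ℝ :=
  Real.pi ^ ((n : ℝ) / 2) * 2 ^ α * Real.Gamma (α / 2) / Real.Gamma (((n : ℝ) - α) / 2)

/-- The Riesz potential `I_α * φ` of a nonnegative function `φ`. -/
noncomputable def rieszPot (n : ℕ) (α : ℝ) (φ : Rn n → ℝ≥0∞) (x : Rn n) : ℝ≥0∞ :=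
  ∫⁻ y, ENNReal.ofReal ((1 / rieszConst n α) * ‖x - y‖ ^ (α - (n : ℝ))) * φ y

/-- The Riesz capacity `cap_{α,s}(E) = inf {‖φ‖_{L^s}^s : φ ≥ 0, I_α*φ ≥ 1 on E}`. -/
noncomputable def rieszCap (n : ℕ) (α s : ℝ) (E : Set (Rn n)) : ℝ≥0∞ :=
  ⨅ (φ : Rn n → ℝ≥0∞) (_ : ∀ x ∈ E, 1 ≤ rieszPot n α φ x), ∫⁻ y, φ y ^ s

/-- The capacitary maximal function associated to the Riesz capacity:
`M_{cap_{α,s}} g(x) := sup_{r>0} (1/(cap_{α,s}(B(0,1)) r^{n-αs})) ∫_{B(x,r)} g d cap_{α,s}`. -/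
noncomputable def maximalCap (n : ℕ) (α s : ℝ) (g : Rn n → ℝ≥0∞) (x : Rn n) : ℝ≥0∞ :=
  ⨆ (r : ℝ) (_ : 0 < r),
    (rieszCap n α s (ball (0 : Rn n) 1) * ENNReal.ofReal (r ^ ((n : ℝ) - α * s)))⁻¹ *
      choquetOn (rieszCap n α s) (ball x r) g

/-- `Γ_{α,s}(g) := inf {‖φ‖_{L^s}^s : φ ≥ 0, I_α * φ ≥ g everywhere}`. -/
noncomputable def rieszGammaFunc (n : ℕ) (α s : ℝ) (g : Rn n → ℝ≥0∞) : ℝ≥0∞ :=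
  ⨅ (φ : Rn n → ℝ≥0∞) (_ : ∀ x, g x ≤ rieszPot n α φ x), ∫⁻ y, φ y ^ s

lemma rieszConst_pos {n : ℕ} {α : ℝ} (hα0 : 0 < α) (hαn : α < n) : 0 < rieszConst n α := by
  have h1 := Real.Gamma_pos_of_pos (half_pos hα0)
  have h2 := Real.Gamma_pos_of_pos (half_pos (sub_pos.2 hαn))
  unfold rieszConst
  positivity

lemma measurable_rieszKernel (n : ℕ) (α : ℝ) (x : Rn n) :
    Measurable fun y : Rn n =>
      ENNReal.ofReal ((1 / rieszConst n α) * ‖x - y‖ ^ (α - (n : ℝ))) := by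
  fun_prop

/-- A test function may be replaced by a measurable one with the same energy. -/
lemma exists_measurable_rieszPot_le {n : ℕ} {α s : ℝ} (hα0 : 0 < α) (hαn : α < n) (hs : 0 < s)
    (φ : Rn n → ℝ≥0∞) (hφ : ∫⁻ y, φ y ^ s ≠ ∞) :
    ∃ ψ : Rn n → ℝ≥0∞, Measurable ψ ∧ ∫⁻ y, ψ y ^ s = ∫⁻ y, φ y ^ s ∧
      ∀ x, rieszPot n α φ x ≤ rieszPot n α ψ x := by
  have hγ := rieszConst_pos hα0 hαn
  obtain ⟨g, hgm, hgle, hgint⟩ := exists_measurable_le_lintegral_eq volume (fun y => φ y ^ s)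
  refine ⟨fun y => g y ^ s⁻¹, hgm.pow_const _, ?_, fun x => ?_⟩
  · rw [hgint]
    refine lintegral_congr fun y => ?_
    rw [← ENNReal.rpow_mul, inv_mul_cancel₀ hs.ne', ENNReal.rpow_one]
  have key : ∀ h : Rn n → ℝ≥0∞, Measurable h → (∀ᵐ y, h y ≤ φ y ^ s) → ∀ᵐ y, h y ≤ g y := by
    intro h hm hle
    have hsup : Measurable fun y => max (g y) (h y) := hgm.max hm
    have hae := ae_eq_of_ae_le_of_lintegral_le (μ := volume) (f := g)
      (g := fun y => max (g y) (h y))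
      (Filter.Eventually.of_forall fun y => le_max_left _ _) (hgint ▸ hφ) hsup.aemeasurable (by
        rw [← hgint]
        refine lintegral_mono_ae ?_
        filter_upwards [hle] with y hy using max_le (hgle y) hy)
    filter_upwards [hae] with y hy
    rw [hy]
    exact le_max_right _ _
  obtain ⟨h, hm, hle, hint⟩ := exists_measurable_le_lintegral_eq volume
    (fun y => ENNReal.ofReal ((1 / rieszConst n α) * ‖x - y‖ ^ (α - (n : ℝ))) * φ y)
  unfold rieszPot
  rw [hint]
  have hKm := measurable_rieszKernel n α x
  have hn : 0 < n := by
    have : (0 : ℝ) < n := hα0.trans hαn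
    exact_mod_cast this
  have : Nonempty (Fin n) := ⟨⟨0, hn⟩⟩
  have hne : ∀ᵐ y : Rn n, y ≠ x := by
    simp [ae_iff]
  have hK0 : ∀ y, y ≠ x →
      ENNReal.ofReal ((1 / rieszConst n α) * ‖x - y‖ ^ (α - (n : ℝ))) ≠ 0 := by
    intro y hy
    have : 0 < ‖x - y‖ := norm_pos_iff.2 (sub_ne_zero.2 hy.symm)
    have h' : 0 < (1 / rieszConst n α) * ‖x - y‖ ^ (α - (n : ℝ)) := by positivity
    simpa using h'
  have := key (fun y => (h y /
      ENNReal.ofReal ((1 / rieszConst n α) * ‖x - y‖ ^ (α - (n : ℝ)))) ^ s)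
    ((hm.div hKm).pow_const _) (by
      filter_upwards [hne] with y hy
      refine ENNReal.rpow_le_rpow ?_ hs.le
      refine ENNReal.div_le_of_le_mul ?_
      rw [mul_comm]
      exact hle y)
  refine lintegral_mono_ae ?_
  filter_upwards [this, hne] with y hy hyx
  have h2 := ENNReal.rpow_le_rpow hy (inv_nonneg.2 hs.le)
  rw [← ENNReal.rpow_mul, mul_inv_cancel₀ hs.ne', ENNReal.rpow_one] at h2
  rwa [ENNReal.div_le_iff' (hK0 y hyx) ENNReal.ofReal_ne_top] at h2

lemma rieszPot_mono {n : ℕ} {α : ℝ} {φ ψ : Rn n → ℝ≥0∞} (h : φ ≤ ψ) (x : Rn n) :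
    rieszPot n α φ x ≤ rieszPot n α ψ x :=
  lintegral_mono fun y => mul_le_mul_right (h y) _

lemma rieszCap_le {n : ℕ} {α s : ℝ} {E : Set (Rn n)} (φ : Rn n → ℝ≥0∞)
    (h : ∀ x ∈ E, 1 ≤ rieszPot n α φ x) : rieszCap n α s E ≤ ∫⁻ y, φ y ^ s :=
  iInf₂_le φ h

lemma rieszCap_mono {n : ℕ} {α s : ℝ} {E F : Set (Rn n)} (h : E ⊆ F) :
    rieszCap n α s E ≤ rieszCap n α s F :=
  le_iInf₂ fun φ hφ => rieszCap_le φ fun x hx => hφ x (h hx)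

lemma rieszCap_empty {n : ℕ} {α s : ℝ} (hs : 0 < s) : rieszCap n α s ∅ = 0 := by
  have := rieszCap_le (n := n) (α := α) (s := s) (E := ∅) 0 (by simp)
  simpa [hs] using this

/-- Near-optimal measurable test functions exist for sets of finite capacity. -/
lemma exists_measurable_test {n : ℕ} {α s : ℝ} (hα0 : 0 < α) (hαn : α < n) (hs : 0 < s)
    {E : Set (Rn n)} {b : ℝ≥0∞} (hb : rieszCap n α s E < b) :
    ∃ φ : Rn n → ℝ≥0∞, Measurable φ ∧ (∀ x ∈ E, 1 ≤ rieszPot n α φ x) ∧ ∫⁻ y, φ y ^ s < b := by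
  simp only [rieszCap, iInf_lt_iff] at hb
  obtain ⟨φ, hφ, hlt⟩ := hb
  obtain ⟨ψ, hψm, hψi, hψ⟩ := exists_measurable_rieszPot_le hα0 hαn hs φ hlt.ne_top
  exact ⟨ψ, hψm, fun x hx => (hφ x hx).trans (hψ x), hψi ▸ hlt⟩

/-- Countable families of sets of finite capacity admit measurable test functions whose weighted
energies exceed the weighted capacities by an arbitrarily small amount. -/
lemma exists_measurable_test_family {n : ℕ} {α s : ℝ} (hα0 : 0 < α) (hαn : α < n) (hs : 0 < s)
    {ι : Type*} [Countable ι] (E : ι → Set (Rn n)) (w : ι → ℝ≥0∞) (hw0 : ∀ i, w i ≠ 0)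
    (hw : ∀ i, w i ≠ ∞) (hfin : ∑' i, w i * rieszCap n α s (E i) ≠ ∞) {ε : ℝ≥0∞} (hε : ε ≠ 0) :
    ∃ φ : ι → Rn n → ℝ≥0∞, (∀ i, Measurable (φ i)) ∧
      (∀ i, ∀ x ∈ E i, 1 ≤ rieszPot n α (φ i) x) ∧
      ∑' i, w i * ∫⁻ y, φ i y ^ s ≤ ∑' i, w i * rieszCap n α s (E i) + ε := by
  obtain ⟨δ, hδ0, hδ⟩ := ENNReal.exists_pos_sum_of_countable hε ι
  have : ∀ i, ∃ φ : Rn n → ℝ≥0∞, Measurable φ ∧ (∀ x ∈ E i, 1 ≤ rieszPot n α φ x) ∧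
      ∫⁻ y, φ y ^ s < rieszCap n α s (E i) + δ i / w i := by
    intro i
    refine exists_measurable_test hα0 hαn hs (ENNReal.lt_add_right ?_ ?_)
    · have h1 := ENNReal.ne_top_of_tsum_ne_top hfin i
      intro h
      rw [h, ENNReal.mul_top (hw0 i)] at h1
      exact h1 rfl
    · simp [(hδ0 i).ne', hw i]
  choose φ hm ht hi using this
  refine ⟨φ, hm, ht, ?_⟩
  calc ∑' i, w i * ∫⁻ y, φ i y ^ s
      ≤ ∑' i, (w i * rieszCap n α s (E i) + δ i) := by
        refine ENNReal.tsum_le_tsum fun i => ?_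
        refine (mul_le_mul_right (hi i).le _).trans ?_
        rw [mul_add, ENNReal.mul_div_cancel (hw0 i) (hw i)]
    _ ≤ _ := by
        rw [ENNReal.tsum_add]
        gcongr

lemma rieszCap_iUnion_le {n : ℕ} {α s : ℝ} (hα0 : 0 < α) (hαn : α < n) (hs : 0 < s)
    {ι : Type*} [Countable ι] (E : ι → Set (Rn n)) :
    rieszCap n α s (⋃ i, E i) ≤ ∑' i, rieszCap n α s (E i) := by
  refine ENNReal.le_of_forall_pos_le_add fun ε hε hfin => ?_
  obtain ⟨φ, hm, ht, hi⟩ := exists_measurable_test_family hα0 hαn hs E (fun _ => 1) (by simp)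
    (by simp) (by simpa using hfin.ne) (ε := ε) (by simpa using hε.ne')
  simp only [one_mul] at hi
  refine (rieszCap_le (fun y => (∑' i, φ i y ^ s) ^ s⁻¹) ?_).trans (le_trans (le_of_eq ?_) hi)
  · intro x hx
    obtain ⟨i, hxi⟩ := mem_iUnion.1 hx
    refine (ht i x hxi).trans (rieszPot_mono (fun y => ?_) x)
    have := ENNReal.rpow_le_rpow (ENNReal.le_tsum (f := fun i => φ i y ^ s) i)
      (inv_nonneg.2 hs.le)
    rwa [← ENNReal.rpow_mul, mul_inv_cancel₀ hs.ne', ENNReal.rpow_one] at this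
  · rw [← lintegral_tsum fun i => ((hm i).pow_const s).aemeasurable]
    refine lintegral_congr fun y => ?_
    rw [← ENNReal.rpow_mul, inv_mul_cancel₀ hs.ne', ENNReal.rpow_one]

lemma rieszCap_union_le {n : ℕ} {α s : ℝ} (hα0 : 0 < α) (hαn : α < n) (hs : 0 < s)
    (E F : Set (Rn n)) :
    rieszCap n α s (E ∪ F) ≤ rieszCap n α s E + rieszCap n α s F := by
  have := rieszCap_iUnion_le (s := s) hα0 hαn hs (fun b : Bool => cond b E F)
  rw [← union_eq_iUnion, tsum_bool, add_comm] at this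
  exact this

lemma lintegral_add_smul {n : ℕ} {f : Rn n → ℝ≥0∞} (hf : Measurable f) (x : Rn n) {r : ℝ}
    (hr : 0 < r) : ∫⁻ y, f y = ENNReal.ofReal (r ^ (n : ℝ)) * ∫⁻ w, f (x + r • w) := by
  have h1 : ∫⁻ w, f (x + r • w) = ∫⁻ y, f (x + y) ∂(Measure.map (fun w : Rn n => r • w) volume) :=
    (lintegral_map (μ := volume) (f := fun y => f (x + y)) (by fun_prop) (by fun_prop)).symm
  rw [h1, Measure.map_addHaar_smul _ hr.ne', lintegral_smul_measure, lintegral_add_left_eq_self,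
    finrank_euclideanSpace_fin, smul_eq_mul, ← mul_assoc, ← ENNReal.ofReal_mul (by positivity),
    abs_of_pos (by positivity), Real.rpow_natCast, mul_inv_cancel₀ (by positivity),
    ENNReal.ofReal_one, one_mul]

lemma rieszCap_ball_le {n : ℕ} {α s : ℝ} (hα0 : 0 < α) (hαn : α < n) (hs : 0 < s)
    (x : Rn n) {r : ℝ} (hr : 0 < r) :
    rieszCap n α s (ball x r) ≤
      rieszCap n α s (ball 0 1) * ENNReal.ofReal (r ^ ((n : ℝ) - α * s)) := by
  have hr0 : 0 < r ^ ((n : ℝ) - α * s) := by positivity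
  rw [← ENNReal.div_le_iff (by simpa using hr0) ENNReal.ofReal_ne_top]
  refine le_of_forall_gt fun b hb => ?_
  obtain ⟨φ, hm, ht, hi⟩ := exists_measurable_test hα0 hαn hs hb
  refine lt_of_le_of_lt ?_ hi
  rw [ENNReal.div_le_iff' (by simpa using hr0) ENNReal.ofReal_ne_top]
  have hcomp : ∀ w : Rn n, r⁻¹ • (x + r • w - x) = w := fun w => by
    rw [add_sub_cancel_left, smul_smul, inv_mul_cancel₀ hr.ne', one_smul]
  have hψm : Measurable fun y : Rn n => ENNReal.ofReal (r ^ (-α)) * φ (r⁻¹ • (y - x)) := by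
    fun_prop
  refine (rieszCap_le (fun y => ENNReal.ofReal (r ^ (-α)) * φ (r⁻¹ • (y - x))) ?_).trans
    (le_of_eq ?_)
  · intro z hz
    have hz' : r⁻¹ • (z - x) ∈ ball (0 : Rn n) 1 := by
      rw [mem_ball, dist_zero_right, norm_smul, norm_inv, Real.norm_of_nonneg hr.le,
        inv_mul_lt_iff₀ hr, mul_one]
      rwa [mem_ball, dist_eq_norm] at hz
    refine (ht _ hz').trans (le_of_eq ?_)
    unfold rieszPot
    rw [lintegral_add_smul (f := fun y => ENNReal.ofReal ((1 / rieszConst n α) *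
        ‖z - y‖ ^ (α - (n : ℝ))) * (ENNReal.ofReal (r ^ (-α)) * φ (r⁻¹ • (y - x))))
        ((measurable_rieszKernel n α z).mul hψm) x hr,
      ← lintegral_const_mul' _ _ ENNReal.ofReal_ne_top]
    refine lintegral_congr fun w => ?_
    rw [hcomp]
    have hzw : z - (x + r • w) = r • (r⁻¹ • (z - x) - w) := by
      rw [smul_sub, smul_smul, mul_inv_cancel₀ hr.ne', one_smul]
      abel
    rw [hzw, norm_smul, Real.norm_of_nonneg hr.le, Real.mul_rpow hr.le (norm_nonneg _),
      ← mul_assoc, ← mul_assoc, ← ENNReal.ofReal_mul (by positivity),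
      ← ENNReal.ofReal_mul' (by positivity)]
    congr 2
    have : r ^ (n : ℝ) * r ^ (α - (n : ℝ)) * r ^ (-α) = 1 := by
      rw [← Real.rpow_add hr, ← Real.rpow_add hr]
      ring_nf
      exact Real.rpow_zero r
    linear_combination (-(1 / rieszConst n α * ‖r⁻¹ • (z - x) - w‖ ^ (α - (n : ℝ)))) * this
  · rw [lintegral_add_smul (hψm.pow_const s) x hr]
    simp only [hcomp, ENNReal.mul_rpow_of_nonneg _ _ hs.le]
    rw [lintegral_const_mul _ (hm.pow_const s), ← mul_assoc,
      ENNReal.ofReal_rpow_of_pos (by positivity), ← ENNReal.ofReal_mul (by positivity),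
      ← Real.rpow_mul hr.le, ← Real.rpow_add hr]
    congr 3
    ring

lemma lintegral_Ioi_le_tsum_zpow {h : ℝ → ℝ≥0∞} (hh : Antitone h) :
    ∫⁻ t in Ioi (0 : ℝ), h t ≤ ∑' k : ℤ, ENNReal.ofReal (2 ^ k) * h (2 ^ k) := by
  have hsub : Ioi (0 : ℝ) ⊆ ⋃ k : ℤ, Ioc ((2 : ℝ) ^ k) (2 ^ (k + 1)) := fun t ht =>
    mem_iUnion.2 (exists_mem_Ioc_zpow ht one_lt_two)
  refine (lintegral_mono_set hsub).trans ((lintegral_iUnion_le _ _).trans ?_)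
  refine ENNReal.tsum_le_tsum fun k => ?_
  refine (setLIntegral_mono' measurableSet_Ioc fun t ht => hh ht.1.le).trans ?_
  rw [setLIntegral_const, Real.volume_Ioc, mul_comm, zpow_add_one₀ two_ne_zero]
  apply le_of_eq
  congr 2
  ring

lemma tsum_zpow_le_lintegral_Ioi {h : ℝ → ℝ≥0∞} (hh : Antitone h) :
    ∑' k : ℤ, ENNReal.ofReal (2 ^ k) * h (2 ^ k) ≤ 2 * ∫⁻ t in Ioi (0 : ℝ), h t := by
  have hmono : Monotone fun k : ℤ => (2 : ℝ) ^ (k - 1) := fun a b hab =>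
    zpow_le_zpow_right₀ one_le_two (by lia)
  have hdisj := hmono.pairwise_disjoint_on_Ioc_succ
  have hsub : (⋃ k : ℤ, Ioc ((2 : ℝ) ^ (k - 1)) (2 ^ (Order.succ k - 1))) ⊆ Ioi 0 := by
    refine iUnion_subset fun k t ht => lt_trans ?_ ht.1
    positivity
  refine le_trans ?_ (mul_le_mul_right (lintegral_mono_set hsub) 2)
  rw [lintegral_iUnion (fun _ => measurableSet_Ioc) hdisj, ← ENNReal.tsum_mul_left]
  refine ENNReal.tsum_le_tsum fun k => ?_
  have hk : Order.succ k - 1 = k := by simp [Order.succ_eq_add_one]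
  rw [hk]
  refine le_trans ?_ (mul_le_mul_right
    (setLIntegral_mono' (f := fun _ => h (2 ^ k)) measurableSet_Ioc fun t ht => hh ht.2) 2)
  rw [setLIntegral_const, Real.volume_Ioc, mul_comm (h _), ← mul_assoc,
    ← ENNReal.ofReal_ofNat 2, ← ENNReal.ofReal_mul (by positivity), zpow_sub_one₀ two_ne_zero]
  apply le_of_eq
  congr 2
  ring

lemma tsum_zpow_le_of_le (u : ℝ) :
    ∑' k : ℤ, (if (2 : ℝ) ^ k ≤ u then ENNReal.ofReal (2 ^ k) else 0) ≤
      2 * ENNReal.ofReal u := by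
  have hanti : Antitone fun t : ℝ => if t ≤ u then (1 : ℝ≥0∞) else 0 := by
    intro a b hab
    by_cases hb : b ≤ u
    · simp [hb, hab.trans hb]
    · simp [hb]
  have := tsum_zpow_le_lintegral_Ioi hanti
  simp only [mul_ite, mul_one, mul_zero] at this
  refine this.trans (mul_le_mul_right (le_of_eq ?_) 2)
  have : (fun t : ℝ => if t ≤ u then (1 : ℝ≥0∞) else 0) = (Iic u).indicator 1 := by
    ext t
    simp [indicator_apply]
  rw [this, lintegral_indicator_one measurableSet_Iic, Measure.restrict_apply measurableSet_Iic,
    inter_comm, Ioi_inter_Iic, Real.volume_Ioc, sub_zero]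

lemma rieszPot_const_mul {n : ℕ} {α : ℝ} {a : ℝ≥0∞} (ha : a ≠ ∞) (φ : Rn n → ℝ≥0∞) (x : Rn n) :
    rieszPot n α (fun y => a * φ y) x = a * rieszPot n α φ x := by
  unfold rieszPot
  rw [← lintegral_const_mul' _ _ ha]
  exact lintegral_congr fun y => mul_left_comm _ _ _

/-- The contribution to a Riesz potential on `ball x r` of the mass lying outside `ball x (2 * r)`
is controlled by the potential at the center. -/
lemma rieszPot_le_near_add {n : ℕ} {α : ℝ} (hα0 : 0 < α) (hαn : α < n) {φ : Rn n → ℝ≥0∞}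
    (hm : Measurable φ) {x y : Rn n} {r : ℝ} (hy : y ∈ ball x r) :
    rieszPot n α φ y ≤ rieszPot n α ((ball x (2 * r)).indicator φ) y +
      ENNReal.ofReal (2 ^ ((n : ℝ) - α)) * rieszPot n α φ x := by
  have hγ := rieszConst_pos hα0 hαn
  unfold rieszPot
  rw [← lintegral_const_mul' _ _ ENNReal.ofReal_ne_top,
    ← lintegral_add_right]
  swap
  · exact ((measurable_rieszKernel n α x).mul hm).const_mul _
  refine lintegral_mono fun z => ?_
  by_cases hz : z ∈ ball x (2 * r)
  · simp [hz]
  · simp only [hz, not_false_eq_true, indicator_of_notMem, mul_zero, zero_add]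
    rw [← mul_assoc, ← ENNReal.ofReal_mul (by positivity)]
    refine mul_le_mul_left (ENNReal.ofReal_le_ofReal ?_) _
    rw [mem_ball, not_lt, dist_eq_norm, norm_sub_rev] at hz
    rw [mem_ball, dist_eq_norm] at hy
    have hr : 0 < r := (norm_nonneg _).trans_lt hy
    have h1 : ‖x - z‖ ≤ ‖y - x‖ + ‖y - z‖ := by
      rw [norm_sub_rev y x]
      exact norm_sub_le_norm_sub_add_norm_sub x y z
    have h2 : ‖x - z‖ / 2 ≤ ‖y - z‖ := by linarith
    have h3 : ‖y - z‖ ^ (α - (n : ℝ)) ≤ (‖x - z‖ / 2) ^ (α - (n : ℝ)) :=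
      Real.rpow_le_rpow_of_nonpos (by linarith) h2 (by linarith)
    rw [Real.div_rpow (norm_nonneg _) zero_le_two, div_eq_mul_inv,
      ← Real.rpow_neg zero_le_two, neg_sub] at h3
    calc (1 / rieszConst n α) * ‖y - z‖ ^ (α - (n : ℝ))
        ≤ (1 / rieszConst n α) * (‖x - z‖ ^ (α - (n : ℝ)) * 2 ^ ((n : ℝ) - α)) := by gcongr
      _ = _ := by ring

lemma rieszCap_ball_inter_le {n : ℕ} {α s : ℝ} (hα0 : 0 < α) (hαn : α < n) (hs : 0 < s)
    {φ : Rn n → ℝ≥0∞} (hm : Measurable φ) {E : Set (Rn n)} (hE : ∀ y ∈ E, 1 ≤ rieszPot n α φ y)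
    {x : Rn n} {r : ℝ}
    (hx : ENNReal.ofReal (2 ^ ((n : ℝ) - α)) * rieszPot n α φ x ≤ 2⁻¹) :
    rieszCap n α s {y | y ∈ ball x r ∧ y ∈ E} ≤ 2 ^ s * ∫⁻ z in ball x (2 * r), φ z ^ s := by
  refine (rieszCap_le (fun z => 2 * (ball x (2 * r)).indicator φ z) ?_).trans (le_of_eq ?_)
  · rintro y ⟨hyx, hyE⟩
    rw [rieszPot_const_mul ENNReal.ofNat_ne_top]
    have h1 := (hE y hyE).trans ((rieszPot_le_near_add hα0 hαn hm hyx).trans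
      (add_le_add_right hx _))
    have h2 : (2 : ℝ≥0∞)⁻¹ ≤ rieszPot n α ((ball x (2 * r)).indicator φ) y := by
      rw [← ENNReal.inv_two_add_inv_two] at h1
      exact (ENNReal.add_le_add_iff_right (by simp)).1 h1
    calc (1 : ℝ≥0∞) = 2 * 2⁻¹ := (ENNReal.mul_inv_cancel two_ne_zero ENNReal.ofNat_ne_top).symm
      _ ≤ _ := mul_le_mul_right h2 2
  · simp only [ENNReal.mul_rpow_of_nonneg _ _ hs.le]
    rw [lintegral_const_mul' _ _ (by simp), ← lintegral_indicator measurableSet_ball]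
    congr 1
    refine lintegral_congr fun z => ?_
    by_cases hz : z ∈ ball x (2 * r) <;> simp [hz, hs]

lemma rieszCap_lt_rieszPot_le {n : ℕ} {α s : ℝ} (hs : 0 < s) (φ : Rn n → ℝ≥0∞) {a : ℝ≥0∞}
    (ha : a ≠ ∞) :
    rieszCap n α s {x | 2⁻¹ < a * rieszPot n α φ x} ≤ (2 * a) ^ s * ∫⁻ y, φ y ^ s := by
  have ha' : 2 * a ≠ ∞ := ENNReal.mul_ne_top ENNReal.ofNat_ne_top ha
  refine (rieszCap_le (fun y => 2 * a * φ y) fun x hx => ?_).trans (le_of_eq ?_)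
  · rw [rieszPot_const_mul ha', mul_assoc]
    calc (1 : ℝ≥0∞) = 2 * 2⁻¹ := (ENNReal.mul_inv_cancel two_ne_zero ENNReal.ofNat_ne_top).symm
      _ ≤ _ := mul_le_mul_right (le_of_lt hx) 2
  · simp only [ENNReal.mul_rpow_of_nonneg _ _ hs.le]
    rw [lintegral_const_mul']
    exact ENNReal.mul_ne_top (ENNReal.rpow_ne_top_of_nonneg hs.le ENNReal.ofNat_ne_top)
      (ENNReal.rpow_ne_top_of_nonneg hs.le ha)

/-- Capacitary weak-type bound for the fractional maximal function of order `α * s`. -/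
lemma rieszCap_fractional_maximal_le {n : ℕ} {α s : ℝ} (hα0 : 0 < α) (hαn : α < n) (hs : 0 < s)
    (hsn : 0 < (n : ℝ) - α * s) (Φ : Rn n → ℝ≥0∞) (hΦ : ∫⁻ z, Φ z ≠ ∞) {l : ℝ≥0∞} (hl0 : l ≠ 0)
    (hl : l ≠ ∞) :
    l * rieszCap n α s {x | ∃ r : ℝ, 0 < r ∧
        l * ENNReal.ofReal (r ^ ((n : ℝ) - α * s)) < ∫⁻ z in ball x (2 * r), Φ z} ≤
      rieszCap n α s (ball 0 1) * ENNReal.ofReal (11 ^ ((n : ℝ) - α * s)) * ∫⁻ z, Φ z := by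
  set d : ℝ := (n : ℝ) - α * s
  set H : Set (Rn n) := {x | ∃ r : ℝ, 0 < r ∧
        l * ENNReal.ofReal (r ^ d) < ∫⁻ z in ball x (2 * r), Φ z}
  have hex : ∀ x : Rn n, ∃ r : ℝ, 0 < r ∧ (x ∈ H →
      l * ENNReal.ofReal (r ^ d) < ∫⁻ z in ball x (2 * r), Φ z) := by
    intro x
    by_cases hx : x ∈ H
    · obtain ⟨r, hr, h⟩ := hx
      exact ⟨r, hr, fun _ => h⟩
    · exact ⟨1, one_pos, fun h => absurd h hx⟩
  choose ρ hρ0 hρ using hex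
  have hbound : ∀ x ∈ H, 2 * ρ x ≤ 2 * ((∫⁻ z, Φ z) / l).toReal ^ d⁻¹ := by
    intro x hx
    have h1 : ENNReal.ofReal (ρ x ^ d) ≤ (∫⁻ z, Φ z) / l := by
      rw [ENNReal.le_div_iff_mul_le (Or.inl hl0) (Or.inl hl), mul_comm]
      exact (hρ x hx).le.trans (setLIntegral_le_lintegral _ _)
    rw [ENNReal.ofReal_le_iff_le_toReal (ENNReal.div_ne_top hΦ hl0)] at h1
    have h2 := Real.rpow_le_rpow (Real.rpow_nonneg (hρ0 x).le d) h1 (inv_nonneg.2 hsn.le)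
    rw [← Real.rpow_mul (hρ0 x).le, mul_inv_cancel₀ hsn.ne', Real.rpow_one] at h2
    linarith
  obtain ⟨u, huH, hdisj, hcov⟩ := Vitali.exists_disjoint_subfamily_covering_enlargement_closedBall
    H id (fun x => 2 * ρ x) _ hbound 5 (by norm_num)
  have hucount : u.Countable := hdisj.countable_of_nonempty_interior fun x _ => by
    refine ⟨x, ball_subset_interior_closedBall (mem_ball_self ?_)⟩
    have := hρ0 x
    positivity
  have : Countable u := hucount.to_subtype
  have hsub : H ⊆ ⋃ b : u, ball (b : Rn n) (11 * ρ b) := by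
    intro x hx
    obtain ⟨b, hb, hxb⟩ := hcov x hx
    have hmem : x ∈ closedBall b (5 * (2 * ρ b)) :=
      hxb (mem_closedBall_self (by have := hρ0 x; positivity))
    refine mem_iUnion.2 ⟨⟨b, hb⟩, ?_⟩
    rw [mem_closedBall] at hmem
    rw [mem_ball]
    have := hρ0 b
    dsimp only
    linarith
  calc l * rieszCap n α s H
      ≤ l * ∑' b : u, rieszCap n α s (ball (b : Rn n) (11 * ρ b)) := by
        gcongr
        exact (rieszCap_mono hsub).trans (rieszCap_iUnion_le hα0 hαn hs _)
    _ = ∑' b : u, l * rieszCap n α s (ball (b : Rn n) (11 * ρ b)) := ENNReal.tsum_mul_left.symm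
    _ ≤ ∑' b : u, rieszCap n α s (ball 0 1) * ENNReal.ofReal (11 ^ d) *
          ∫⁻ z in closedBall (b : Rn n) (2 * ρ b), Φ z := by
        refine ENNReal.tsum_le_tsum fun b => ?_
        have hb := hρ0 (b : Rn n)
        calc l * rieszCap n α s (ball (b : Rn n) (11 * ρ b))
            ≤ l * (rieszCap n α s (ball 0 1) * ENNReal.ofReal ((11 * ρ b) ^ d)) := by
              gcongr
              exact rieszCap_ball_le hα0 hαn hs _ (by positivity)
          _ = rieszCap n α s (ball 0 1) * ENNReal.ofReal (11 ^ d) *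
                (l * ENNReal.ofReal (ρ b ^ d)) := by
              rw [Real.mul_rpow (by norm_num) hb.le, ENNReal.ofReal_mul (by positivity)]
              ring
          _ ≤ _ := by
              gcongr
              exact (hρ b (huH b.2)).le.trans (lintegral_mono_set ball_subset_closedBall)
    _ = rieszCap n α s (ball 0 1) * ENNReal.ofReal (11 ^ d) *
          ∫⁻ z in ⋃ b ∈ u, closedBall b (2 * ρ b), Φ z := by
        rw [ENNReal.tsum_mul_left]
        congr 1
        exact (lintegral_biUnion hucount (fun _ _ => measurableSet_closedBall) hdisj Φ).symm
    _ ≤ _ := mul_le_mul_right (setLIntegral_le_lintegral _ _) _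

/-- Weak-type bound in terms of test functions for the dyadic superlevel sets. -/
lemma rieszCap_lt_maximalCap_le {n : ℕ} {α s : ℝ} (hα0 : 0 < α) (hαn : α < n) (hs : 0 < s)
    (hsn : 0 < (n : ℝ) - α * s) (hc0 : rieszCap n α s (ball 0 1) ≠ 0)
    (hc : rieszCap n α s (ball 0 1) ≠ ∞) (g : Rn n → ℝ≥0∞) (φ : ℤ → Rn n → ℝ≥0∞)
    (hm : ∀ k, Measurable (φ k))
    (hφ : ∀ k : ℤ, ∀ x ∈ {x | ENNReal.ofReal (2 ^ k) < g x}, 1 ≤ rieszPot n α (φ k) x)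
    (hfin : ∑' k : ℤ, ENNReal.ofReal (2 ^ k) * ∫⁻ y, φ k y ^ s ≠ ∞) {t : ℝ} (ht : 0 < t) :
    ENNReal.ofReal t * rieszCap n α s {x | ENNReal.ofReal t < maximalCap n α s g x} ≤
      (4 * (2 * ENNReal.ofReal (2 ^ ((n : ℝ) - α))) ^ s +
        2 * 2 ^ s * ENNReal.ofReal (11 ^ ((n : ℝ) - α * s))) *
        ∑' k : ℤ, ENNReal.ofReal (2 ^ k) * ∫⁻ y, φ k y ^ s := by
  set d : ℝ := (n : ℝ) - α * s
  set c := rieszCap n α s (ball 0 1)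
  set A := ENNReal.ofReal (2 ^ ((n : ℝ) - α))
  set T := ∑' k : ℤ, ENNReal.ofReal (2 ^ k) * ∫⁻ y, φ k y ^ s with hT
  set Φ : Rn n → ℝ≥0∞ := fun z => ∑' k : ℤ, ENNReal.ofReal (2 ^ k) * φ k z ^ s with hΦ
  have hΦm : ∀ k : ℤ, Measurable fun z => ENNReal.ofReal (2 ^ k) * φ k z ^ s :=
    fun k => ((hm k).pow_const s).const_mul _
  have hΦint : ∀ B : Set (Rn n),
      ∫⁻ z in B, Φ z = ∑' k : ℤ, ENNReal.ofReal (2 ^ k) * ∫⁻ z in B, φ k z ^ s := by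
    intro B
    rw [hΦ, lintegral_tsum fun k => (hΦm k).aemeasurable]
    exact tsum_congr fun k => lintegral_const_mul' _ _ ENNReal.ofReal_ne_top
  have hΦT : ∫⁻ z, Φ z = T := by simpa using hΦint univ
  have h2s0 : (2 : ℝ≥0∞) ^ s ≠ 0 := by simp
  have h2s : (2 : ℝ≥0∞) ^ s ≠ ∞ := ENNReal.rpow_ne_top_of_nonneg hs.le ENNReal.ofNat_ne_top
  have ht2' : ENNReal.ofReal t = ENNReal.ofReal (t / 2) * 2 := by
    rw [← ENNReal.ofReal_ofNat 2, ← ENNReal.ofReal_mul (by positivity)]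
    congr 1
    ring
  set l : ℝ≥0∞ := ENNReal.ofReal (t / 2) * c / 2 ^ s with hl
  have hl0 : l ≠ 0 := by simp [hl, ENNReal.div_eq_zero_iff, ht, hc0, h2s]
  have hltop : l ≠ ∞ := ENNReal.div_ne_top (ENNReal.mul_ne_top ENNReal.ofReal_ne_top hc) h2s0
  set G : ℤ → Set (Rn n) := fun k =>
    {x | t / 4 < 2 ^ k ∧ 2⁻¹ < A * rieszPot n α (φ k) x} with hG
  set H : Set (Rn n) := {x | ∃ r : ℝ, 0 < r ∧
    l * ENNReal.ofReal (r ^ d) < ∫⁻ z in ball x (2 * r), Φ z}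
  have hsub : {x | ENNReal.ofReal t < maximalCap n α s g x} ⊆ (⋃ k, G k) ∪ H := by
    intro x hx
    by_cases hxG : x ∈ ⋃ k, G k
    · exact Or.inl hxG
    right
    simp only [mem_ofPred_eq, maximalCap, lt_iSup_iff] at hx
    obtain ⟨r, hr, hx⟩ := hx
    refine ⟨r, hr, ?_⟩
    have hrd : 0 < r ^ d := by positivity
    have hR0 : ENNReal.ofReal (r ^ d) ≠ 0 := by simpa using hrd
    set R := ENNReal.ofReal (r ^ d)
    have hcR0 : c * R ≠ 0 := mul_ne_zero hc0 hR0
    have hcR : c * R ≠ ∞ := ENNReal.mul_ne_top hc ENNReal.ofReal_ne_top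
    rw [mul_comm, ← div_eq_mul_inv, ENNReal.lt_div_iff_mul_lt (Or.inl hcR0) (Or.inl hcR)] at hx
    have hanti : Antitone fun u : ℝ =>
        rieszCap n α s {y | y ∈ ball x r ∧ ENNReal.ofReal u < g y} := fun a b hab =>
      rieszCap_mono fun y hy => ⟨hy.1, (ENNReal.ofReal_le_ofReal hab).trans_lt hy.2⟩
    have hterm : ∀ k : ℤ, ENNReal.ofReal (2 ^ k) *
        rieszCap n α s {y | y ∈ ball x r ∧ ENNReal.ofReal (2 ^ k) < g y} ≤
        (if (2 : ℝ) ^ k ≤ t / 4 then ENNReal.ofReal (2 ^ k) else 0) * (c * R) +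
          2 ^ s * (ENNReal.ofReal (2 ^ k) * ∫⁻ z in ball x (2 * r), φ k z ^ s) := by
      intro k
      by_cases hk : (2 : ℝ) ^ k ≤ t / 4
      · rw [if_pos hk]
        refine le_add_right (mul_le_mul_right ?_ _)
        exact (rieszCap_mono fun y hy => hy.1).trans (rieszCap_ball_le hα0 hαn hs x hr)
      · rw [if_neg hk, zero_mul, zero_add, mul_left_comm]
        refine mul_le_mul_right ?_ _
        refine rieszCap_ball_inter_le hα0 hαn hs (hm k) (hφ k) ?_
        by_contra hlt
        exact hxG (mem_iUnion.2 ⟨k, not_le.1 hk, not_le.1 hlt⟩)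
    have hQ : choquetOn (rieszCap n α s) (ball x r) g ≤
        ENNReal.ofReal (t / 2) * (c * R) + 2 ^ s * ∫⁻ z in ball x (2 * r), Φ z := by
      refine (lintegral_Ioi_le_tsum_zpow hanti).trans ((ENNReal.tsum_le_tsum hterm).trans ?_)
      rw [ENNReal.tsum_add, ENNReal.tsum_mul_right, ENNReal.tsum_mul_left, ← hΦint]
      refine add_le_add_left (mul_le_mul_left ((tsum_zpow_le_of_le _).trans (le_of_eq ?_)) _) _
      rw [← ENNReal.ofReal_ofNat 2, ← ENNReal.ofReal_mul (by positivity)]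
      congr 1
      ring
    have hlt := hx.trans_le hQ
    rw [ht2', mul_right_comm, mul_two] at hlt
    have hlt' := lt_of_add_lt_add_left hlt
    rw [hl, ← ENNReal.mul_div_right_comm, mul_assoc]
    exact ENNReal.div_lt_of_lt_mul' hlt'
  have hGle : ENNReal.ofReal t * rieszCap n α s (⋃ k, G k) ≤ 4 * (2 * A) ^ s * T := by
    refine (mul_le_mul_right (rieszCap_iUnion_le hα0 hαn hs G) _).trans ?_
    rw [← ENNReal.tsum_mul_left, hT, ← ENNReal.tsum_mul_left]
    refine ENNReal.tsum_le_tsum fun k => ?_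
    by_cases hk : t / 4 < 2 ^ k
    · have h1 : ENNReal.ofReal t ≤ 4 * ENNReal.ofReal (2 ^ k) := by
        rw [← ENNReal.ofReal_ofNat 4, ← ENNReal.ofReal_mul (by positivity)]
        exact ENNReal.ofReal_le_ofReal (by linarith)
      have h2 : rieszCap n α s (G k) ≤ (2 * A) ^ s * ∫⁻ y, φ k y ^ s :=
        (rieszCap_mono fun x hx => hx.2).trans
          (rieszCap_lt_rieszPot_le hs (φ k) ENNReal.ofReal_ne_top)
      refine (mul_le_mul' h1 h2).trans (le_of_eq ?_)
      ring
    · have : G k = ∅ := by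
        ext x
        simp [hG, hk]
      rw [this, rieszCap_empty hs, mul_zero]
      exact zero_le
  have hHle : ENNReal.ofReal t * rieszCap n α s H ≤ 2 * 2 ^ s * ENNReal.ofReal (11 ^ d) * T := by
    have h1 := rieszCap_fractional_maximal_le hα0 hαn hs hsn Φ (hΦT ▸ hfin) hl0 hltop
    rw [hΦT] at h1
    have h2 : ENNReal.ofReal t = 2 * 2 ^ s * c⁻¹ * l := by
      calc ENNReal.ofReal t
          = 2 * (2 ^ s * (2 ^ s)⁻¹) * (c⁻¹ * c) * ENNReal.ofReal (t / 2) := by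
            rw [ENNReal.mul_inv_cancel h2s0 h2s, ENNReal.inv_mul_cancel hc0 hc, ht2']
            ring
        _ = _ := by
            rw [hl, div_eq_mul_inv (ENNReal.ofReal (t / 2) * c)]
            ring
    calc ENNReal.ofReal t * rieszCap n α s H
        = 2 * 2 ^ s * c⁻¹ * (l * rieszCap n α s H) := by rw [h2]; ring
      _ ≤ 2 * 2 ^ s * c⁻¹ * (c * ENNReal.ofReal (11 ^ d) * T) := by gcongr
      _ = 2 * 2 ^ s * (c⁻¹ * c) * ENNReal.ofReal (11 ^ d) * T := by ring
      _ = _ := by rw [ENNReal.inv_mul_cancel hc0 hc, mul_one]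
  calc ENNReal.ofReal t * rieszCap n α s {x | ENNReal.ofReal t < maximalCap n α s g x}
      ≤ ENNReal.ofReal t * (rieszCap n α s (⋃ k, G k) + rieszCap n α s H) := by
        gcongr
        exact (rieszCap_mono hsub).trans (rieszCap_union_le hα0 hαn hs _ _)
    _ ≤ _ := by
        rw [mul_add, add_mul]
        exact add_le_add hGle hHle

lemma rieszCap_eq_zero_of_ball {n : ℕ} {α s : ℝ} (hα0 : 0 < α) (hαn : α < n) (hs : 0 < s)
    (hc : rieszCap n α s (ball 0 1) = 0) (E : Set (Rn n)) : rieszCap n α s E = 0 := by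
  have hsub : E ⊆ ⋃ k : ℕ, ball (0 : Rn n) (k + 1) := fun x _ => by
    obtain ⟨k, hk⟩ := exists_nat_gt ‖x‖
    refine mem_iUnion.2 ⟨k, ?_⟩
    rw [mem_ball, dist_zero_right]
    linarith
  refine le_antisymm ((rieszCap_mono hsub).trans
    ((rieszCap_iUnion_le hα0 hαn hs _).trans (le_of_eq ?_))) zero_le
  refine ENNReal.tsum_eq_zero.2 fun k => le_antisymm ?_ zero_le
  have := rieszCap_ball_le hα0 hαn hs (0 : Rn n) (r := k + 1) (by positivity)
  rwa [hc, zero_mul] at this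

/-- Weak-type `(1,1)` bound for the Riesz capacitary maximal
function on `L^1(cap_{α,s})`. -/
theorem statement16 (n : ℕ) (α s : ℝ) (hα0 : 0 < α) (hαn : α < n)
    (hs1 : 1 < s) (hsn : s < n / α) :
    ∃ C : ℝ, 0 < C ∧ ∀ f : Rn n → ℝ, MemChoquetLp (rieszCap n α s) 1 f →
      ∀ t : ℝ, 0 < t →
        rieszCap n α s
            {x | ENNReal.ofReal t < maximalCap n α s (fun y => ENNReal.ofReal |f y|) x} ≤
          (ENNReal.ofReal C / ENNReal.ofReal t) *
            choquet (rieszCap n α s) (fun x => ENNReal.ofReal |f x|) := by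
  have hs : 0 < s := one_pos.trans hs1
  have hd : 0 < (n : ℝ) - α * s := by
    rw [lt_div_iff₀ hα0] at hsn
    linarith
  set C₁ : ℝ≥0∞ := 4 * (2 * ENNReal.ofReal (2 ^ ((n : ℝ) - α))) ^ s +
    2 * 2 ^ s * ENNReal.ofReal (11 ^ ((n : ℝ) - α * s)) with hC₁
  have hpos : 0 < (11 : ℝ) ^ ((n : ℝ) - α * s) := by positivity
  have hC₁0 : C₁ ≠ 0 := by simp [hC₁, hpos]
  have hC₁top : C₁ ≠ ∞ := by
    refine ENNReal.add_ne_top.2 ⟨?_, ?_⟩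
    · exact ENNReal.mul_ne_top ENNReal.ofNat_ne_top (ENNReal.rpow_ne_top_of_nonneg hs.le
        (ENNReal.mul_ne_top ENNReal.ofNat_ne_top ENNReal.ofReal_ne_top))
    · exact ENNReal.mul_ne_top (ENNReal.mul_ne_top ENNReal.ofNat_ne_top
        (ENNReal.rpow_ne_top_of_nonneg hs.le ENNReal.ofNat_ne_top)) ENNReal.ofReal_ne_top
  have hC0 : C₁ * 2 ≠ 0 := mul_ne_zero hC₁0 two_ne_zero
  have hCtop : C₁ * 2 ≠ ∞ := ENNReal.mul_ne_top hC₁top ENNReal.ofNat_ne_top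
  refine ⟨(C₁ * 2).toReal, ENNReal.toReal_pos hC0 hCtop, fun f hf t ht => ?_⟩
  rw [ENNReal.ofReal_toReal hCtop]
  set g : Rn n → ℝ≥0∞ := fun y => ENNReal.ofReal |f y|
  have ht0 : ENNReal.ofReal t ≠ 0 := by simpa using ht
  by_cases hc0 : rieszCap n α s (ball 0 1) = 0
  · rw [rieszCap_eq_zero_of_ball hα0 hαn hs hc0]
    exact zero_le
  by_cases hc : rieszCap n α s (ball 0 1) = ∞
  · have : {x | ENNReal.ofReal t < maximalCap n α s g x} = ∅ := by
      refine eq_empty_of_forall_notMem fun x hx => ?_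
      simp only [mem_ofPred_eq, maximalCap, lt_iSup_iff] at hx
      obtain ⟨r, hr, hx⟩ := hx
      have hrd : 0 < r ^ ((n : ℝ) - α * s) := by positivity
      rw [hc, ENNReal.top_mul (by simpa using hrd), ENNReal.inv_top, zero_mul] at hx
      exact not_lt_zero hx
    rw [this, rieszCap_empty hs]
    exact zero_le
  have hfin : choquet (rieszCap n α s) g ≠ ∞ := by
    have := hf.2
    simp only [ENNReal.rpow_one] at this
    exact this.ne
  have hS : ∑' k : ℤ, ENNReal.ofReal (2 ^ k) * rieszCap n α s {x | ENNReal.ofReal (2 ^ k) < g x} ≤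
      2 * choquet (rieszCap n α s) g :=
    tsum_zpow_le_lintegral_Ioi (h := fun u => rieszCap n α s {x | ENNReal.ofReal u < g x})
      fun a b hab => rieszCap_mono fun y hy => (ENNReal.ofReal_le_ofReal hab).trans_lt hy
  have hStop := ne_top_of_le_ne_top (ENNReal.mul_ne_top ENNReal.ofNat_ne_top hfin) hS
  rw [← ENNReal.mul_div_right_comm, ENNReal.le_div_iff_mul_le (Or.inl ht0)
    (Or.inl ENNReal.ofReal_ne_top), mul_comm _ (ENNReal.ofReal t), mul_assoc C₁, mul_comm C₁,
    ← ENNReal.div_le_iff hC₁0 hC₁top]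
  refine le_trans (ENNReal.le_of_forall_pos_le_add fun ε hε _ => ?_) hS
  obtain ⟨φ, hm, hφ, hi⟩ := exists_measurable_test_family (s := s) hα0 hαn hs
    (fun k : ℤ => {x | ENNReal.ofReal (2 ^ k) < g x}) (fun k => ENNReal.ofReal (2 ^ k))
    (fun k => by simp; positivity) (fun k => ENNReal.ofReal_ne_top) hStop
    (ε := ε) (by simpa using hε.ne')
  refine le_trans ?_ hi
  rw [ENNReal.div_le_iff' hC₁0 hC₁top]
  exact rieszCap_lt_maximalCap_le hα0 hαn hs hd hc0 hc g φ hm hφ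
    (ne_top_of_le_ne_top (ENNReal.add_ne_top.2 ⟨hStop, ENNReal.coe_ne_top⟩) hi) ht

end
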